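/- arXiv:gr-qc/0404039 — 2 statements merged into one kernel-verified Lean document; each statement's English description precedes it below -/
import Mathlib

section
/- For every 0 < l < 1, the function F_l satisfies lim_{q→0⁺} F_l(q) / (3q/(l+1))^{1/(1−l)} = 1; in particular F_l(q) → 0 as q → 0⁺, so the quantized inverse triad component vanishes rather than diverges at small triad values. -/
/-- The (large-j) eigenvalue function of the inverse triad operator in loop
quantum cosmology, with ambiguity parameter l:
F_l(q) = (2l(l+1)(l+2)/3)^{1/(l−1)} · [ (l+1)((q+1)^{l+2} − |q−1|^{l+2})
  − (l+2)q((q+1)^{l+1} − sgn(q−1)|q−1|^{l+1}) ]^{1/(1−l)}. -/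
noncomputable def invTriadF (l q : ℝ) : ℝ :=
  (2 * l * (l + 1) * (l + 2) / 3) ^ ((1 : ℝ) / (l - 1)) *
    ((l + 1) * ((q + 1) ^ (l + 2) - |q - 1| ^ (l + 2))
      - (l + 2) * q * ((q + 1) ^ (l + 1)
        - Real.sign (q - 1) * |q - 1| ^ (l + 1))) ^ ((1 : ℝ) / (1 - l))

/-!
For `0 < q < 1` the absolute values and the sign resolve, and the bracket in `F_l` becomes a smooth
function of `q` which vanishes at `0` with derivative
`2 (l + 1) (l + 2) - 2 (l + 2) = 2 l (l + 2) > 0`. It is therefore asymptotic to `2 l (l + 2) q`,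
and dividing by `2 l (l + 1) (l + 2) / 3` and raising to the power `1 / (1 - l)` gives the
asymptotics of `F_l`.
-/

open Asymptotics Filter Topology

theorem isEquivalent_sub_of_hasDerivAt {𝕜 E : Type*} [NontriviallyNormedField 𝕜]
    [NormedAddCommGroup E] [NormedSpace 𝕜 E] {f : 𝕜 → E} {f' : E} {a : 𝕜}
    (hf : HasDerivAt f f' a) (hf' : f' ≠ 0) :
    (fun x => f x - f a) ~[𝓝 a] fun x => (x - a) • f' := by
  have hsub : (fun x => x - a) =O[𝓝 a] fun x => (x - a) • f' :=
    IsBigO.of_bound ‖f'‖⁻¹ <| .of_forall fun x => by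
      rw [norm_smul, mul_comm ‖x - a‖, inv_mul_cancel_left₀ (norm_ne_zero_iff.mpr hf')]
  exact hf.isLittleO.trans_isBigO hsub

theorem isEquivalent_rpow_const {α : Type*} {F : Filter α} {u v : α → ℝ}
    (huv : u ~[F] v) (hv : ∀ᶠ x in F, 0 ≤ v x) (r : ℝ) :
    (fun x => u x ^ r) ~[F] fun x => v x ^ r := by
  have habs : v =ᶠ[F] |v| := hv.mono fun x hx => (abs_of_nonneg hx).symm
  have hpow : u ^ r ~[F] |v| ^ r := (huv.congr_right habs).rpow (abs_nonneg v)
  exact hpow.congr_right <| habs.symm.mono fun x hx => congrArg (· ^ r) hx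

theorem tendsto_const_mul_rpow_nhds_zero (c : ℝ) {p : ℝ} (hp : 0 < p) :
    Tendsto (fun q : ℝ => (c * q) ^ p) (𝓝 0) (𝓝 0) := by
  have hcont : Continuous fun q : ℝ => (c * q) ^ p :=
    (continuous_const_mul c).rpow_const fun _ => .inr hp.le
  simpa [Real.zero_rpow hp.ne'] using hcont.tendsto 0

/-- The bracket in the definition of `invTriadF`, in the form it takes for `q < 1`, where
`|q - 1| = 1 - q` and `sgn (q - 1) = -1`. -/
noncomputable def invTriadBracket (l q : ℝ) : ℝ :=
  (l + 1) * ((q + 1) ^ (l + 2) - (1 - q) ^ (l + 2))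
    - (l + 2) * q * ((q + 1) ^ (l + 1) + (1 - q) ^ (l + 1))

theorem invTriadBracket_zero (l : ℝ) : invTriadBracket l 0 = 0 := by
  simp [invTriadBracket]

theorem hasDerivAt_invTriadBracket_zero (l : ℝ) :
    HasDerivAt (invTriadBracket l) (2 * l * (l + 2)) 0 := by
  have hplus (p : ℝ) : HasDerivAt (fun q : ℝ => (q + 1) ^ p) p 0 := by
    simpa using ((hasDerivAt_id (0 : ℝ)).add_const 1).rpow_const (p := p) (by simp)
  have hminus (p : ℝ) : HasDerivAt (fun q : ℝ => (1 - q) ^ p) (-p) 0 := by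
    simpa using ((hasDerivAt_id (0 : ℝ)).const_sub 1).rpow_const (p := p) (by simp)
  have hlinear : HasDerivAt (fun q : ℝ => (l + 2) * q) (l + 2) 0 := by
    simpa using (hasDerivAt_id (0 : ℝ)).const_mul (l + 2)
  refine ((((hplus (l + 2)).sub (hminus (l + 2))).const_mul (l + 1)).sub
    (hlinear.mul ((hplus (l + 1)).add (hminus (l + 1))))).congr_deriv ?_
  simp only [Pi.add_apply, zero_add, sub_zero, Real.one_rpow]
  ring

theorem invTriadBracket_isEquivalent {l : ℝ} (hl : l ≠ 0) (hl' : l + 2 ≠ 0) :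
    invTriadBracket l ~[𝓝 0] fun q => 2 * l * (l + 2) * q := by
  simpa only [invTriadBracket_zero, sub_zero, smul_eq_mul, mul_comm] using
    isEquivalent_sub_of_hasDerivAt (hasDerivAt_invTriadBracket_zero l) (by positivity)

theorem invTriadF_eq_bracket_div_rpow {l q : ℝ} (hl : 0 ≤ 2 * l * (l + 1) * (l + 2) / 3)
    (hq : q < 1) (hB : 0 ≤ invTriadBracket l q) :
    invTriadF l q =
      (invTriadBracket l q / (2 * l * (l + 1) * (l + 2) / 3)) ^ (1 / (1 - l)) := by
  have hq' : q - 1 < 0 := sub_neg.mpr hq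
  have hexp : 1 / (l - 1) = -(1 / (1 - l)) := by rw [← neg_sub 1 l, div_neg]
  rw [Real.div_rpow hB hl, div_eq_inv_mul, ← Real.rpow_neg hl, ← hexp, invTriadF,
    invTriadBracket, abs_of_neg hq', Real.sign_of_neg hq', neg_sub, neg_one_mul, sub_neg_eq_add]

theorem invTriadF_isEquivalent {l : ℝ} (hl : 0 < l) :
    invTriadF l ~[𝓝[>] 0] fun q => (3 * q / (l + 1)) ^ (1 / (1 - l)) := by
  have hbracket : invTriadBracket l ~[𝓝[>] 0] fun q => 2 * l * (l + 2) * q :=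
    (invTriadBracket_isEquivalent hl.ne' (by positivity)).mono nhdsWithin_le_nhds
  have hpos : ∀ᶠ q : ℝ in 𝓝[>] 0, 0 < q := self_mem_nhdsWithin
  have hlt_one : ∀ᶠ q : ℝ in 𝓝[>] 0, q < 1 :=
    nhdsWithin_le_nhds (eventually_lt_nhds one_pos)
  have hbracket_nonneg : ∀ᶠ q in 𝓝[>] 0, 0 ≤ invTriadBracket l q :=
    hbracket.eventually_nonneg <| hpos.mono fun q hq => by positivity
  have hbase : (fun q => invTriadBracket l q / (2 * l * (l + 1) * (l + 2) / 3))
      ~[𝓝[>] 0] fun q => 3 * q / (l + 1) := by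
    refine (hbracket.div (.refl (u := fun _ => 2 * l * (l + 1) * (l + 2) / 3))).congr_right
      (.of_forall fun q => ?_)
    simp only [Pi.div_apply]
    field_simp
  refine (isEquivalent_rpow_const hbase (hpos.mono fun q hq => by positivity) _).congr_left ?_
  filter_upwards [hlt_one, hbracket_nonneg] with q hq hB
  exact (invTriadF_eq_bracket_div_rpow (by positivity) hq hB).symm

/-- For every 0 < l < 1, F_l(q) ∼ (3q/(l+1))^{1/(1−l)} as q → 0⁺; in particular
F_l(q) → 0 as q → 0⁺, so the quantized inverse triad component vanishes rather
than diverges at small triad values. -/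
theorem invTriadF_small_q_behavior (l : ℝ) (hl0 : 0 < l) (hl1 : l < 1) :
    Filter.Tendsto
        (fun q : ℝ => invTriadF l q / (3 * q / (l + 1)) ^ ((1 : ℝ) / (1 - l)))
        (nhdsWithin 0 (Set.Ioi 0)) (nhds 1)
      ∧ Filter.Tendsto (fun q : ℝ => invTriadF l q)
        (nhdsWithin 0 (Set.Ioi 0)) (nhds 0) := by
  have hasymp := invTriadF_isEquivalent hl0
  have hexp : 0 < 1 / (1 - l) := one_div_pos.mpr (sub_pos.mpr hl1)
  have hmodel_ne_zero : ∀ᶠ q : ℝ in 𝓝[>] 0, (3 * q / (l + 1)) ^ (1 / (1 - l)) ≠ 0 := by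
    filter_upwards [self_mem_nhdsWithin] with q (hq : 0 < q)
    positivity
  have hmodel_tendsto :
      Tendsto (fun q : ℝ => (3 * q / (l + 1)) ^ (1 / (1 - l))) (𝓝[>] 0) (𝓝 0) := by
    simpa only [mul_div_right_comm] using
      (tendsto_const_mul_rpow_nhds_zero (3 / (l + 1)) hexp).mono_left nhdsWithin_le_nhds
  exact ⟨(isEquivalent_iff_tendsto_one hmodel_ne_zero).mp hasymp,
    hasymp.symm.tendsto_nhds hmodel_tendsto⟩
end

section
/- Let σ ∈ ℝ², ρ > 0 and let v : I → ℝ² be differentiable on an interval I with v'(t) = (‖v(t)‖² − 1/2)(σ/2 + ρv(t)). Then for all s, t ∈ I, (σ×v(s))·(σ·v(t) + ‖σ‖²/(2ρ)) = (σ×v(t))·(σ·v(s) + ‖σ‖²/(2ρ)). Equivalently, the orbit in the velocity plane is the straight line v_⊥ = A(v_∥ + ‖σ‖/(2ρ)) through the isolated fixed point, with A constant along the solution. -/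
open scoped RealInnerProductSpace

open Set

/-!
The displacement `w = v + σ / (2ρ)` from the isolated fixed point solves the scalar linear equation
`w' = ρ (‖v‖² - 1/2) w`, so `w t` is a multiple of `w s`. Both `σ × v = σ × w` and
`σ · v + ‖σ‖² / (2ρ) = σ · w` are linear in `w`, hence are scaled by the same factor.
-/

section LinearODE

variable {E : Type*} [NormedAddCommGroup E] [NormedSpace ℝ E] {g : ℝ → ℝ} {a b : ℝ}

lemma hasDerivWithinAt_integral_uIcc_of_continuousOn [CompleteSpace E] {f : ℝ → E}
    (hf : ContinuousOn f (uIcc a b)) {x : ℝ} (hx : x ∈ uIcc a b) :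
    HasDerivWithinAt (fun u ↦ ∫ r in a..u, f r) (f x) (uIcc a b) x := by
  have : Fact (x ∈ uIcc a b) := ⟨hx⟩
  exact intervalIntegral.integral_hasDerivWithinAt_right
    (hf.mono (uIcc_subset_uIcc_left hx)).intervalIntegrable
    (hf.stronglyMeasurableAtFilter_nhdsWithin measurableSet_uIcc x) (hf x hx)

lemma eq_exp_integral_smul_of_hasDerivWithinAt_smul {w : ℝ → E} (hg : ContinuousOn g (uIcc a b))
    (hw : ∀ x ∈ uIcc a b, HasDerivWithinAt w (g x • w x) (uIcc a b) x) :
    w b = Real.exp (∫ r in a..b, g r) • w a := by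
  set G : ℝ → ℝ := fun x ↦ ∫ r in a..x, g r
  have hderiv : ∀ x ∈ uIcc a b,
      HasDerivWithinAt (fun x ↦ Real.exp (-G x) • w x) 0 (uIcc a b) x := fun x hx ↦ by
    have hGx : HasDerivWithinAt G (g x) (uIcc a b) x :=
      hasDerivWithinAt_integral_uIcc_of_continuousOn hg hx
    refine (hGx.neg.exp.smul (hw x hx)).congr_deriv ?_
    module
  have hconst : Real.exp (-G a) • w a = Real.exp (-G b) • w b := by
    have hbound := (convex_uIcc a b).norm_image_sub_le_of_norm_hasDerivWithin_le (C := 0) hderiv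
      (by simp) right_mem_uIcc left_mem_uIcc
    rwa [zero_mul, norm_le_zero_iff, sub_eq_zero] at hbound
  rw [show G a = 0 from intervalIntegral.integral_same, neg_zero, Real.exp_zero, one_smul] at hconst
  rw [hconst, smul_smul, ← Real.exp_add, add_neg_cancel, Real.exp_zero, one_smul]

lemma sub_eq_exp_integral_smul_sub_of_hasDerivWithinAt {I : Set ℝ} (hI : I.OrdConnected)
    {v : ℝ → E} {p : E} (hg : ContinuousOn g I)
    (hv : ∀ t ∈ I, HasDerivWithinAt v (g t • (v t - p)) I t) {s t : ℝ} (hs : s ∈ I) (ht : t ∈ I) :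
    v t - p = Real.exp (∫ r in s..t, g r) • (v s - p) :=
  have hst : uIcc s t ⊆ I := hI.uIcc_subset hs ht
  eq_exp_integral_smul_of_hasDerivWithinAt_smul (w := fun x ↦ v x - p) (hg.mono hst)
    fun x hx ↦ ((hv x (hst hx)).mono hst).sub_const p

end LinearODE

/-- The planar cross product `σ × v = σ₁ v₂ - σ₂ v₁`, as a linear form in `v`: a multiple of the
component of `v` orthogonal to `σ`. The coordinates `σ₁`, `σ₂` are `σ 0`, `σ 1`. -/
noncomputable def planarCross (σ : EuclideanSpace ℝ (Fin 2)) : EuclideanSpace ℝ (Fin 2) →ₗ[ℝ] ℝ :=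
  σ 0 • EuclideanSpace.projₗ 1 - σ 1 • EuclideanSpace.projₗ 0

lemma planarCross_apply (σ v : EuclideanSpace ℝ (Fin 2)) :
    planarCross σ v = σ 0 * v 1 - σ 1 * v 0 := rfl

lemma planarCross_self (σ : EuclideanSpace ℝ (Fin 2)) : planarCross σ σ = 0 := by
  rw [planarCross_apply, mul_comm, sub_self]

theorem orbit_is_straight_line_general {E : Type*} [NormedAddCommGroup E] [InnerProductSpace ℝ E]
    {σ : E} {ρ : ℝ} (hρ : ρ ≠ 0) {I : Set ℝ} (hI : I.OrdConnected) {v : ℝ → E} {g : ℝ → ℝ}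
    (hg : ContinuousOn g I)
    (hv : ∀ t ∈ I, HasDerivWithinAt v (g t • ((1 / 2 : ℝ) • σ + ρ • v t)) I t)
    {L : E →ₗ[ℝ] ℝ} (hL : L σ = 0) {s t : ℝ} (hs : s ∈ I) (ht : t ∈ I) :
    L (v s) * (⟪σ, v t⟫ + ‖σ‖ ^ 2 / (2 * ρ)) = L (v t) * (⟪σ, v s⟫ + ‖σ‖ ^ 2 / (2 * ρ)) := by
  set p : E := -(1 / (2 * ρ)) • σ with hp
  have hLp (x : E) : L (x - p) = L x := by simp [hp, hL]
  have hinner (x : E) : ⟪σ, x - p⟫ = ⟪σ, x⟫ + ‖σ‖ ^ 2 / (2 * ρ) := by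
    rw [hp, inner_sub_right, inner_smul_right, real_inner_self_eq_norm_sq]
    ring
  have hfield (x : E) : (1 / 2 : ℝ) • σ + ρ • x = ρ • (x - p) := by
    rw [hp]
    match_scalars <;> field_simp
  obtain ⟨c, hc⟩ : ∃ c : ℝ, v t - p = c • (v s - p) :=
    ⟨_, sub_eq_exp_integral_smul_sub_of_hasDerivWithinAt hI (hg.mul_const ρ)
      (fun r hr ↦ (hv r hr).congr_deriv (by rw [hfield, smul_smul])) hs ht⟩
  rw [← hLp (v s), ← hLp (v t), ← hinner, ← hinner, hc, map_smul, inner_smul_right, smul_eq_mul]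
  ring

/-- The orbit of the asymptotic velocity dynamics in the velocity plane is a
straight line through the isolated fixed point: along any solution of
v' = (‖v‖² − 1/2)(σ/2 + ρv) on an interval I, for all s, t ∈ I one has
(σ×v(s))·(σ·v(t) + ‖σ‖²/(2ρ)) = (σ×v(t))·(σ·v(s) + ‖σ‖²/(2ρ)), i.e. the slope
A of the line v_⊥ = A(v_∥ + ‖σ‖/(2ρ)) is constant along the solution. -/
theorem orbit_is_straight_line
    (σ : EuclideanSpace ℝ (Fin 2)) (ρ : ℝ) (hρ : 0 < ρ)
    (I : Set ℝ) (hI : I.OrdConnected) (v : ℝ → EuclideanSpace ℝ (Fin 2))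
    (hv : ∀ t ∈ I, HasDerivAt v
        ((‖v t‖ ^ 2 - 1 / 2) • ((1 / 2 : ℝ) • σ + ρ • v t)) t) :
    ∀ s ∈ I, ∀ t ∈ I,
      (σ 0 * v s 1 - σ 1 * v s 0) * (⟪σ, v t⟫ + ‖σ‖ ^ 2 / (2 * ρ))
        = (σ 0 * v t 1 - σ 1 * v t 0) * (⟪σ, v s⟫ + ‖σ‖ ^ 2 / (2 * ρ)) := by
  have hcont : ContinuousOn v I := HasDerivAt.continuousOn hv
  exact fun s hs t ht ↦ orbit_is_straight_line_general hρ.ne' hI (by fun_prop)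
    (fun r hr ↦ (hv r hr).hasDerivWithinAt) (planarCross_self σ) hs ht
end
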